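/- arXiv:2202.07974 — 2 statements merged into one kernel-verified Lean document; each statement's English description precedes it below -/
import Mathlib

section
/- The set 𝒱 is dense in the metric space (C⁰_r(𝕋,S⁰_cl), d^{0,0}): for every v ∈ C⁰_r(𝕋,S⁰_cl) and every ε > 0 there exists w ∈ 𝒱 with d^{0,0}(v,w) < ε. -/
open Real MeasureTheory Filter Topology

noncomputable section

/-- Partial derivative in the first variable `x`. -/
def pdx (f : ℝ × ℝ → ℝ) : ℝ × ℝ → ℝ := fun p => fderiv ℝ f p (1, 0)

/-- Partial derivative in the second variable `ξ`. -/
def pdxi (f : ℝ × ℝ → ℝ) : ℝ × ℝ → ℝ := fun p => fderiv ℝ f p (0, 1)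

/-- Poisson bracket `{f,g} = ∂_ξ f ∂_x g − ∂_x f ∂_ξ g`. -/
def pbr (f g : ℝ × ℝ → ℝ) : ℝ × ℝ → ℝ :=
  fun p => pdxi f p * pdx g p - pdx f p * pdxi g p

/-- Harmonic oscillator symbol `h₀(x,ξ) = (x²+ξ²)/2`. -/
def h0 : ℝ × ℝ → ℝ := fun p => (p.1 ^ 2 + p.2 ^ 2) / 2

/-- The harmonic flow `φᵗ`. -/
def flow (t : ℝ) (p : ℝ × ℝ) : ℝ × ℝ :=
  (p.1 * Real.cos t + p.2 * Real.sin t, -p.1 * Real.sin t + p.2 * Real.cos t)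

/-- Resonant average `⟨v⟩(x,ξ) = (1/2π)∫₀^{2π} v(t,φᵗ(x,ξ)) dt`. -/
def resAvg (v : ℝ → ℝ × ℝ → ℝ) : ℝ × ℝ → ℝ :=
  fun p => (1 / (2 * π)) * ∫ t in (0:ℝ)..(2 * π), v t (flow t p)

/-- Positively homogeneous of degree `0`. -/
def PosHomog0 (f : ℝ × ℝ → ℝ) : Prop :=
  ∀ (lam : ℝ) (p : ℝ × ℝ), 1 ≤ lam → 1 ≤ p.1 ^ 2 + p.2 ^ 2 →
    f (lam * p.1, lam * p.2) = f p

/-- Membership in `C⁰(𝕋, S^ρ)` (real valued): 2π-periodicity and continuity in `t`,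
smoothness in `(x,ξ)`, and uniform symbol bounds of order `ρ`. -/
def InC0S (ρ : ℝ) (v : ℝ → ℝ × ℝ → ℝ) : Prop :=
  (∀ t p, v (t + 2 * π) p = v t p) ∧
  Continuous (fun q : ℝ × (ℝ × ℝ) => v q.1 q.2) ∧
  (∀ t, ContDiff ℝ (⊤ : ℕ∞) (v t)) ∧
  ∀ α β : ℕ, ∃ C > 0, ∀ (t : ℝ) (p : ℝ × ℝ),
    |pdx^[α] (pdxi^[β] (v t)) p| ≤
      C * (1 + p.1 ^ 2 + p.2 ^ 2) ^ (ρ - ((α : ℝ) + β) / 2)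

/-- Membership in `C⁰_r(𝕋, S⁰_cl)`: a real valued family in `C⁰(𝕋,S⁰)` admitting a
principal symbol `v₀(t,·)`, smooth and positively homogeneous of degree 0, with
`v − v₀ ∈ C⁰(𝕋, S^μ)` for some `μ < 0`. -/
def InC0Scl (v : ℝ → ℝ × ℝ → ℝ) : Prop :=
  InC0S 0 v ∧ ∃ (v0 : ℝ → ℝ × ℝ → ℝ) (μ : ℝ), μ < 0 ∧
    (∀ t, ContDiff ℝ (⊤ : ℕ∞) (v0 t)) ∧ (∀ t, PosHomog0 (v0 t)) ∧
    InC0S μ (fun t p => v t p - v0 t p)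

/-- The set `𝒱`: classical symbols whose principal symbol `v₀` fulfills
`{⟨v₀⟩, h₀} ≢ 0` on `x²+ξ² ≥ 1`. -/
def InV (v : ℝ → ℝ × ℝ → ℝ) : Prop :=
  InC0S 0 v ∧ ∃ (v0 : ℝ → ℝ × ℝ → ℝ) (μ : ℝ), μ < 0 ∧
    (∀ t, ContDiff ℝ (⊤ : ℕ∞) (v0 t)) ∧ (∀ t, PosHomog0 (v0 t)) ∧
    InC0S μ (fun t p => v t p - v0 t p) ∧
    ∃ p : ℝ × ℝ, 1 ≤ p.1 ^ 2 + p.2 ^ 2 ∧ pbr (resAvg v0) h0 p ≠ 0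

/-- The seminorm `℘_j^{0,0}`. -/
def sem00 (j : ℕ) (f : ℝ → ℝ × ℝ → ℝ) : ℝ :=
  ∑ α ∈ Finset.range (j + 1), ∑ β ∈ Finset.range (j + 1 - α),
    ⨆ q : ℝ × (ℝ × ℝ),
      |pdx^[α] (pdxi^[β] (f q.1)) q.2| *
        (1 + q.2.1 ^ 2 + q.2.2 ^ 2) ^ (((α : ℝ) + β) / 2)

/-- The distance `d^{0,0}`. -/
def dist00 (f g : ℝ → ℝ × ℝ → ℝ) : ℝ :=
  ∑' j : ℕ, (1 / 2 ^ j) *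
    (sem00 j (fun t p => f t p - g t p) / (1 + sem00 j (fun t p => f t p - g t p)))

/-!
For fixed `p`, the functional `v₀ ↦ {⟨v₀⟩, h₀}(p)` is linear in the principal symbol. As soon as `𝒱`
has one element `g`, every line `v + δ g` therefore lies in `𝒱` for all small `δ ≠ 0`, and
`d^{0,0}(v, v + δ g) → 0` by dominated convergence of the defining series. An element of `𝒱` is
`cos t · cos θ`, with `θ` the polar angle in phase space, smoothed inside the unit disc: the flow
rotates `θ` at unit speed, so the resonant average is `cos θ / 2`, and `{·, h₀}` is, up to sign, the
derivative along the flow. Since partial derivatives are linear only on differentiable functions,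
the analytic point is that resonant averages of symbols are differentiable, which follows from the
symbol estimates.
-/

open scoped ContDiff

/-! ### Directional derivatives -/

section DirDeriv

variable {E F : Type*} [NormedAddCommGroup E] [NormedSpace ℝ E]
  [NormedAddCommGroup F] [NormedSpace ℝ F]

/-- The derivative of `f` in the fixed direction `u`, as an operator on functions; `pdx` and `pdxi`
are definitionally the cases `u = (1, 0)` and `u = (0, 1)`. -/
def dirDeriv (u : E) (f : E → F) : E → F := fun p => fderiv ℝ f p u

theorem contDiff_iterate_dirDeriv (u : E) {f : E → F} (hf : ContDiff ℝ ∞ f) (n : ℕ) :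
    ContDiff ℝ ∞ ((dirDeriv u)^[n] f) := by
  induction n with
  | zero => exact hf
  | succ n ih =>
    rw [Function.iterate_succ_apply']
    exact (ih.fderiv_right (m := ∞) (by simp)).clm_apply contDiff_const

theorem iterate_dirDeriv_add (u : E) {f g : E → F} (hf : ContDiff ℝ ∞ f) (hg : ContDiff ℝ ∞ g)
    (n : ℕ) : (dirDeriv u)^[n] (f + g) = (dirDeriv u)^[n] f + (dirDeriv u)^[n] g := by
  induction n with
  | zero => rfl
  | succ n ih =>
    simp only [Function.iterate_succ_apply', ih]
    funext p
    have hf' := (contDiff_iterate_dirDeriv u hf n).differentiable (by simp) p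
    have hg' := (contDiff_iterate_dirDeriv u hg n).differentiable (by simp) p
    simp [dirDeriv, fderiv_add hf' hg']

theorem iterate_dirDeriv_smul (u : E) (c : ℝ) (f : E → F) (n : ℕ) :
    (dirDeriv u)^[n] (c • f) = c • (dirDeriv u)^[n] f := by
  have hcomm : Function.Commute (dirDeriv u) fun f : E → F => c • f := fun f => by
    funext p
    simp [dirDeriv, fderiv_const_smul_field]
  exact hcomm.iterate_left n f

/-- Positive homogeneity of degree `-k` of a function on a set `U`, tested on dilations by factors
`≥ 1` only, so that `U` may be the exterior of a ball. -/
def NegHomogeneousOn (k : ℕ) (f : E → F) (U : Set E) : Prop :=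
  ∀ c : ℝ, 1 ≤ c → ∀ p ∈ U, c ^ k • f (c • p) = f p

protected theorem NegHomogeneousOn.dirDeriv {k : ℕ} {f : E → F} {U : Set E}
    (hf : NegHomogeneousOn k f U) (hU : IsOpen U) (u : E) :
    NegHomogeneousOn (k + 1) (dirDeriv u f) U := by
  intro c hc p hp
  have heq : (c ^ k • fun q => f (c • q)) =ᶠ[𝓝 p] f := by
    filter_upwards [hU.mem_nhds hp] with q hq using hf c hc q hq
  have hderiv : fderiv ℝ f p = c ^ k • c • fderiv ℝ f (c • p) := by
    rw [← heq.fderiv_eq (𝕜 := ℝ), fderiv_const_smul_field, Pi.smul_apply, fderiv_comp_smul]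
  simp only [dirDeriv, hderiv, smul_smul, pow_succ, smul_apply]

protected theorem NegHomogeneousOn.iterate_dirDeriv {k : ℕ} {f : E → F} {U : Set E}
    (hf : NegHomogeneousOn k f U) (hU : IsOpen U) (u : E) (n : ℕ) :
    NegHomogeneousOn (k + n) ((dirDeriv u)^[n] f) U := by
  induction n with
  | zero => exact hf
  | succ n ih =>
    rw [Function.iterate_succ_apply']
    exact ih.dirDeriv hU u

end DirDeriv

theorem contDiff_iterate_pdx_pdxi {f : ℝ × ℝ → ℝ} (hf : ContDiff ℝ ∞ f) (α β : ℕ) :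
    ContDiff ℝ ∞ (pdx^[α] (pdxi^[β] f)) :=
  contDiff_iterate_dirDeriv _ (contDiff_iterate_dirDeriv _ hf β) α

theorem iterate_pdx_pdxi_add {f g : ℝ × ℝ → ℝ} (hf : ContDiff ℝ ∞ f) (hg : ContDiff ℝ ∞ g)
    (α β : ℕ) :
    pdx^[α] (pdxi^[β] (f + g)) = pdx^[α] (pdxi^[β] f) + pdx^[α] (pdxi^[β] g) :=
  (congrArg _ (iterate_dirDeriv_add _ hf hg β)).trans <|
    iterate_dirDeriv_add _ (contDiff_iterate_dirDeriv _ hf β) (contDiff_iterate_dirDeriv _ hg β) α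

theorem iterate_pdx_pdxi_smul (c : ℝ) (f : ℝ × ℝ → ℝ) (α β : ℕ) :
    pdx^[α] (pdxi^[β] (c • f)) = c • pdx^[α] (pdxi^[β] f) :=
  (congrArg _ (iterate_dirDeriv_smul _ c f β)).trans (iterate_dirDeriv_smul _ c _ α)

theorem fderiv_apply_eq_pdx_pdxi (f : ℝ × ℝ → ℝ) (p q : ℝ × ℝ) :
    fderiv ℝ f p q = q.1 * pdx f p + q.2 * pdxi f p := by
  have hq : q = q.1 • ((1, 0) : ℝ × ℝ) + q.2 • ((0, 1) : ℝ × ℝ) := by ext <;> simp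
  conv_lhs => rw [hq, map_add, map_smul, map_smul]
  rfl

theorem norm_fderiv_le_pdx_pdxi (f : ℝ × ℝ → ℝ) (p : ℝ × ℝ) :
    ‖fderiv ℝ f p‖ ≤ |pdx f p| + |pdxi f p| := by
  refine ContinuousLinearMap.opNorm_le_bound _ (by positivity) fun q => ?_
  calc ‖fderiv ℝ f p q‖ ≤ |q.1| * |pdx f p| + |q.2| * |pdxi f p| := by
        rw [fderiv_apply_eq_pdx_pdxi, ← abs_mul, ← abs_mul]
        exact abs_add_le _ _
    _ ≤ ‖q‖ * |pdx f p| + ‖q‖ * |pdxi f p| := by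
        gcongr
        exacts [norm_fst_le q, norm_snd_le q]
    _ = (|pdx f p| + |pdxi f p|) * ‖q‖ := by ring

/-! ### Symbol classes -/

theorem InC0S.mono {ρ ρ' : ℝ} (hρ : ρ ≤ ρ') {v : ℝ → ℝ × ℝ → ℝ} (hv : InC0S ρ v) :
    InC0S ρ' v := by
  obtain ⟨hper, hcont, hsmooth, hbound⟩ := hv
  refine ⟨hper, hcont, hsmooth, fun α β => ?_⟩
  obtain ⟨C, hC, h⟩ := hbound α β
  refine ⟨C, hC, fun t p => (h t p).trans ?_⟩
  have : 1 ≤ 1 + p.1 ^ 2 + p.2 ^ 2 := by nlinarith [sq_nonneg p.1, sq_nonneg p.2]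
  gcongr

theorem inC0S_zero (ρ : ℝ) : InC0S ρ 0 := by
  refine ⟨fun _ _ => rfl, continuous_const, fun _ => contDiff_const, fun α β =>
    ⟨1, one_pos, fun t p => ?_⟩⟩
  have hzero : pdx^[α] (pdxi^[β] 0) = 0 := by simpa using iterate_pdx_pdxi_smul 0 0 α β
  rw [Pi.zero_apply, hzero, Pi.zero_apply, abs_zero]
  positivity

theorem InC0S.add {ρ : ℝ} {v w : ℝ → ℝ × ℝ → ℝ} (hv : InC0S ρ v) (hw : InC0S ρ w) :
    InC0S ρ (v + w) := by
  obtain ⟨hv_per, hv_cont, hv_smooth, hv_bound⟩ := hv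
  obtain ⟨hw_per, hw_cont, hw_smooth, hw_bound⟩ := hw
  refine ⟨fun t p => congrArg₂ (· + ·) (hv_per t p) (hw_per t p), hv_cont.add hw_cont,
    fun t => (hv_smooth t).add (hw_smooth t), fun α β => ?_⟩
  obtain ⟨C, hC, hvC⟩ := hv_bound α β
  obtain ⟨D, hD, hwD⟩ := hw_bound α β
  refine ⟨C + D, by positivity, fun t p => ?_⟩
  rw [Pi.add_apply, iterate_pdx_pdxi_add (hv_smooth t) (hw_smooth t), add_mul]
  exact (abs_add_le _ _).trans (add_le_add (hvC t p) (hwD t p))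

theorem InC0S.periodic_smul {ρ : ℝ} {c : ℝ → ℝ} {v : ℝ → ℝ × ℝ → ℝ} (hv : InC0S ρ v)
    (hc : Continuous c) (hper : Function.Periodic c (2 * π)) : InC0S ρ fun t => c t • v t := by
  obtain ⟨hv_per, hv_cont, hv_smooth, hv_bound⟩ := hv
  refine ⟨fun t p => congrArg₂ (· * ·) (hper t) (hv_per t p), (hc.comp continuous_fst).mul hv_cont,
    fun t => (hv_smooth t).const_smul (c t), fun α β => ?_⟩
  obtain ⟨K, hK, hcK⟩ :=
    (hper.isBounded_of_continuous two_pi_pos.ne' hc).exists_pos_norm_le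
  obtain ⟨C, hC, h⟩ := hv_bound α β
  refine ⟨K * C, by positivity, fun t p => ?_⟩
  rw [iterate_pdx_pdxi_smul, Pi.smul_apply, smul_eq_mul, abs_mul, mul_assoc]
  exact mul_le_mul (hcK _ ⟨t, rfl⟩) (h t p) (abs_nonneg _) hK.le

theorem InC0S.const_smul {ρ : ℝ} {v : ℝ → ℝ × ℝ → ℝ} (hv : InC0S ρ v) (c : ℝ) :
    InC0S ρ (c • v) :=
  hv.periodic_smul continuous_const fun _ => rfl

theorem InC0S.exists_norm_fderiv_le {ρ : ℝ} {v : ℝ → ℝ × ℝ → ℝ} (hv : InC0S ρ v) :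
    ∃ C > 0, ∀ t p, ‖fderiv ℝ (v t) p‖ ≤ C * (1 + p.1 ^ 2 + p.2 ^ 2) ^ (ρ - 1 / 2) := by
  obtain ⟨-, -, -, hbound⟩ := hv
  obtain ⟨C, hC, hx⟩ := hbound 1 0
  obtain ⟨D, hD, hξ⟩ := hbound 0 1
  refine ⟨C + D, by positivity, fun t p => (norm_fderiv_le_pdx_pdxi _ p).trans ?_⟩
  rw [add_mul]
  exact add_le_add (by simpa using hx t p) (by simpa using hξ t p)

theorem one_add_sq_rpow_smul_le {c : ℝ} (hc : 1 ≤ c) (k : ℕ) (p : ℝ × ℝ) :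
    (1 + (c • p).1 ^ 2 + (c • p).2 ^ 2) ^ ((k : ℝ) / 2) ≤
      c ^ k * (1 + p.1 ^ 2 + p.2 ^ 2) ^ ((k : ℝ) / 2) := by
  have hck : c ^ k = (c ^ 2) ^ ((k : ℝ) / 2) := by
    rw [← rpow_natCast_mul (by positivity), Nat.cast_ofNat, mul_div_cancel₀ _ two_ne_zero,
      rpow_natCast]
  rw [hck, ← mul_rpow (by positivity) (by positivity)]
  refine rpow_le_rpow (by positivity) ?_ (by positivity)
  simp only [Prod.smul_fst, Prod.smul_snd, smul_eq_mul]
  nlinarith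

theorem isOpen_one_lt_sq_add_sq : IsOpen {p : ℝ × ℝ | 1 < p.1 ^ 2 + p.2 ^ 2} :=
  isOpen_lt continuous_const (by fun_prop)

-- Outside the unit disc the weighted function `‖f‖ (1 + x² + ξ²)^(k/2)` is nonincreasing along
-- rays, so it is bounded by its maximum on a compact set.
theorem NegHomogeneousOn.exists_norm_le {F : Type*} [NormedAddCommGroup F] [NormedSpace ℝ F]
    {k : ℕ} {f : ℝ × ℝ → F} (hf : NegHomogeneousOn k f {p | 1 < p.1 ^ 2 + p.2 ^ 2})
    (hcont : Continuous f) :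
    ∃ C > 0, ∀ p, ‖f p‖ ≤ C * (1 + p.1 ^ 2 + p.2 ^ 2) ^ (-((k : ℝ) / 2)) := by
  have hpos (p : ℝ × ℝ) : 0 < 1 + p.1 ^ 2 + p.2 ^ 2 := by positivity
  have hweighted : Continuous fun p : ℝ × ℝ => ‖f p‖ * (1 + p.1 ^ 2 + p.2 ^ 2) ^ ((k : ℝ) / 2) :=
    hcont.norm.mul (Continuous.rpow_const (by fun_prop) fun p => .inl (hpos p).ne')
  obtain ⟨M, hM⟩ := (isCompact_closedBall (0 : ℝ × ℝ) 2).bddAbove_image hweighted.continuousOn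
  replace hM (p : ℝ × ℝ) (hp : ‖p‖ ≤ 2) : ‖f p‖ * (1 + p.1 ^ 2 + p.2 ^ 2) ^ ((k : ℝ) / 2) ≤ M :=
    hM ⟨p, mem_closedBall_zero_iff.2 hp, rfl⟩
  refine ⟨max M 1, by positivity, fun p => ?_⟩
  rw [rpow_neg (hpos p).le, ← div_eq_mul_inv, le_div_iff₀ (rpow_pos_of_pos (hpos p) _)]
  refine le_trans ?_ (le_max_left M 1)
  rcases le_or_gt ‖p‖ 2 with hp | hp
  · exact hM p hp
  obtain ⟨c, q, hc, hq, rfl⟩ : ∃ (c : ℝ) (q : ℝ × ℝ), 1 ≤ c ∧ ‖q‖ = 2 ∧ c • q = p := by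
    refine ⟨‖p‖ / 2, (2 / ‖p‖) • p, by linarith, ?_, ?_⟩
    · rw [norm_smul, norm_div, norm_norm, Real.norm_ofNat, div_mul_cancel₀ _ (by positivity)]
    · rw [smul_smul, div_mul_div_cancel₀ two_ne_zero, div_self (by positivity), one_smul]
  have hq_mem : 1 < q.1 ^ 2 + q.2 ^ 2 := by
    rcases max_choice ‖q.1‖ ‖q.2‖ with h | h <;> rw [Prod.norm_def, h, Real.norm_eq_abs] at hq <;>
      nlinarith [sq_abs q.1, sq_abs q.2, sq_nonneg q.1, sq_nonneg q.2]
  calc ‖f (c • q)‖ * (1 + (c • q).1 ^ 2 + (c • q).2 ^ 2) ^ ((k : ℝ) / 2)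
      ≤ ‖f (c • q)‖ * (c ^ k * (1 + q.1 ^ 2 + q.2 ^ 2) ^ ((k : ℝ) / 2)) := by
        gcongr
        exact one_add_sq_rpow_smul_le hc k q
    _ = ‖f q‖ * (1 + q.1 ^ 2 + q.2 ^ 2) ^ ((k : ℝ) / 2) := by
        rw [← hf c hc q hq_mem, norm_smul, norm_pow, Real.norm_of_nonneg (by positivity)]
        ring
    _ ≤ M := hM q hq.le

theorem PosHomog0.inC0S {f : ℝ × ℝ → ℝ} (hhom : PosHomog0 f) (hsmooth : ContDiff ℝ ∞ f) :
    InC0S 0 fun _ => f := by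
  refine ⟨fun _ _ => rfl, hsmooth.continuous.comp continuous_snd, fun _ => hsmooth,
    fun α β => ?_⟩
  have hhom0 : NegHomogeneousOn 0 f {p | 1 < p.1 ^ 2 + p.2 ^ 2} := fun c hc p hp => by
    rw [pow_zero, one_smul]
    exact hhom c p hc hp.le
  have hderiv := (hhom0.iterate_dirDeriv isOpen_one_lt_sq_add_sq (0, 1) β).iterate_dirDeriv
    isOpen_one_lt_sq_add_sq (1, 0) α
  obtain ⟨C, hC, h⟩ := hderiv.exists_norm_le (contDiff_iterate_pdx_pdxi hsmooth α β).continuous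
  refine ⟨C, hC, fun _ p => (h p).trans_eq ?_⟩
  push_cast
  ring_nf

/-- `v₀` is a principal symbol of the family `v`, in the sense common to `InC0Scl` and `InV`. -/
def IsPrincipalSymbol (v0 v : ℝ → ℝ × ℝ → ℝ) : Prop :=
  (∀ t, ContDiff ℝ ∞ (v0 t)) ∧ (∀ t, PosHomog0 (v0 t)) ∧ ∃ μ < 0, InC0S μ (v - v0)

theorem IsPrincipalSymbol.inC0S {v0 v : ℝ → ℝ × ℝ → ℝ} (h : IsPrincipalSymbol v0 v)
    (hv : InC0S 0 v) : InC0S 0 v0 := by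
  obtain ⟨-, -, μ, hμ, hdiff⟩ := h
  have heq : v0 = v + (-1 : ℝ) • (v - v0) := by module
  exact heq ▸ hv.add ((hdiff.mono hμ.le).const_smul (-1))

theorem IsPrincipalSymbol.add_smul {v0 v w0 w : ℝ → ℝ × ℝ → ℝ} (hv : IsPrincipalSymbol v0 v)
    (hw : IsPrincipalSymbol w0 w) (c : ℝ) : IsPrincipalSymbol (v0 + c • w0) (v + c • w) := by
  obtain ⟨hv_smooth, hv_hom, μ, hμ, hv_diff⟩ := hv
  obtain ⟨hw_smooth, hw_hom, ν, hν, hw_diff⟩ := hw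
  refine ⟨fun t => (hv_smooth t).add ((hw_smooth t).const_smul c), fun t lam p hlam hp => ?_,
    max μ ν, max_lt hμ hν, ?_⟩
  · exact congrArg₂ (· + c • ·) (hv_hom t lam p hlam hp) (hw_hom t lam p hlam hp)
  · have heq : v + c • w - (v0 + c • w0) = v - v0 + c • (w - w0) := by module
    exact heq ▸ (hv_diff.mono (le_max_left μ ν)).add
      ((hw_diff.mono (le_max_right μ ν)).const_smul c)

/-! ### Continuity of the distance along lines -/

theorem sem00_nonneg (j : ℕ) (f : ℝ → ℝ × ℝ → ℝ) : 0 ≤ sem00 j f :=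
  Finset.sum_nonneg fun _ _ => Finset.sum_nonneg fun _ _ => Real.iSup_nonneg fun _ => by positivity

theorem sem00_smul (j : ℕ) (c : ℝ) (f : ℝ → ℝ × ℝ → ℝ) : sem00 j (c • f) = |c| * sem00 j f := by
  simp only [sem00, Pi.smul_apply, iterate_pdx_pdxi_smul, smul_eq_mul, abs_mul, mul_assoc,
    Finset.mul_sum, Real.mul_iSup_of_nonneg (abs_nonneg c)]

theorem dist00_add_smul (v g : ℝ → ℝ × ℝ → ℝ) (δ : ℝ) :
    dist00 v (v + δ • g) = ∑' j : ℕ, (1 / 2 ^ j) * (|δ| * sem00 j g / (1 + |δ| * sem00 j g)) := by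
  have hdiff : (fun t p => v t p - (v + δ • g) t p) = (-δ) • g := by
    funext t p
    simp
  simp only [dist00, hdiff, sem00_smul, abs_neg]

theorem tendsto_dist00_add_smul (v g : ℝ → ℝ × ℝ → ℝ) :
    Tendsto (fun δ : ℝ => dist00 v (v + δ • g)) (𝓝 0) (𝓝 0) := by
  simp only [dist00_add_smul]
  rw [← tsum_zero (α := ℝ) (β := ℕ)]
  refine tendsto_tsum_of_dominated_convergence (bound := fun j : ℕ => (1 / 2 : ℝ) ^ j)
    summable_geometric_two (fun j => ?_) (Eventually.of_forall fun δ j => ?_)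
  · have hden : 1 + |(0 : ℝ)| * sem00 j g ≠ 0 := by simp
    have hcont : ContinuousAt
        (fun δ : ℝ => (1 / 2 ^ j : ℝ) * (|δ| * sem00 j g / (1 + |δ| * sem00 j g))) 0 := by
      fun_prop (disch := assumption)
    simpa [ContinuousAt] using hcont
  · have hs : 0 ≤ |δ| * sem00 j g := mul_nonneg (abs_nonneg δ) (sem00_nonneg j g)
    rw [Real.norm_of_nonneg (by positivity), one_div_pow]
    refine mul_le_of_le_one_right (by positivity) ?_
    rw [div_le_one (by positivity)]
    linarith

/-! ### The harmonic flow and the resonant average -/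

theorem flow_zero (p : ℝ × ℝ) : flow 0 p = p := by
  simp [flow]

theorem continuous_flow : Continuous fun q : ℝ × (ℝ × ℝ) => flow q.1 q.2 := by
  unfold flow
  fun_prop

theorem flow_fst_sq_add_snd_sq (t : ℝ) (p : ℝ × ℝ) :
    (flow t p).1 ^ 2 + (flow t p).2 ^ 2 = p.1 ^ 2 + p.2 ^ 2 := by
  simp only [flow]
  linear_combination (p.1 ^ 2 + p.2 ^ 2) * sin_sq_add_cos_sq t

/-- The harmonic flow at time `t` as a continuous linear map. -/
def flowCLM (t : ℝ) : ℝ × ℝ →L[ℝ] ℝ × ℝ :=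
  cos t • .id ℝ (ℝ × ℝ) + sin t • (ContinuousLinearMap.snd ℝ ℝ ℝ).prod (-.fst ℝ ℝ ℝ)

theorem coe_flowCLM (t : ℝ) : ⇑(flowCLM t) = flow t := by
  funext p
  ext <;> simp [flowCLM, flow] <;> ring

theorem norm_flowCLM_le (t : ℝ) : ‖flowCLM t‖ ≤ 2 := by
  have hJ : ‖(ContinuousLinearMap.snd ℝ ℝ ℝ).prod (-.fst ℝ ℝ ℝ)‖ ≤ 1 := by
    rw [ContinuousLinearMap.opNorm_prod, Prod.norm_def, norm_neg]
    exact max_le (ContinuousLinearMap.norm_snd_le ..) (ContinuousLinearMap.norm_fst_le ..)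
  calc ‖flowCLM t‖ ≤ |cos t| * ‖ContinuousLinearMap.id ℝ (ℝ × ℝ)‖
        + |sin t| * ‖(ContinuousLinearMap.snd ℝ ℝ ℝ).prod (-.fst ℝ ℝ ℝ)‖ := by
        refine (norm_add_le _ _).trans_eq ?_
        rw [norm_smul, norm_smul, Real.norm_eq_abs, Real.norm_eq_abs]
    _ ≤ 1 * 1 + 1 * 1 := by
        gcongr
        exacts [abs_cos_le_one t, ContinuousLinearMap.norm_id_le, abs_sin_le_one t]
    _ = 2 := by norm_num

theorem continuous_comp_flow {v : ℝ → ℝ × ℝ → ℝ}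
    (hv : Continuous fun q : ℝ × (ℝ × ℝ) => v q.1 q.2) (p : ℝ × ℝ) :
    Continuous fun t => v t (flow t p) :=
  hv.comp (continuous_id.prodMk (continuous_flow.comp (continuous_id.prodMk continuous_const)))

theorem resAvg_add {v w : ℝ → ℝ × ℝ → ℝ} (hv : Continuous fun q : ℝ × (ℝ × ℝ) => v q.1 q.2)
    (hw : Continuous fun q : ℝ × (ℝ × ℝ) => w q.1 q.2) :
    resAvg (v + w) = resAvg v + resAvg w := by
  funext p
  simp only [resAvg, Pi.add_apply]
  rw [intervalIntegral.integral_add ((continuous_comp_flow hv p).intervalIntegrable _ _)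
    ((continuous_comp_flow hw p).intervalIntegrable _ _), mul_add]

theorem resAvg_smul (c : ℝ) (v : ℝ → ℝ × ℝ → ℝ) : resAvg (c • v) = c • resAvg v := by
  funext p
  simp only [resAvg, Pi.smul_apply, smul_eq_mul, intervalIntegral.integral_const_mul]
  ring

theorem hasFDerivAt_comp_flow {f : ℝ × ℝ → ℝ} {t : ℝ} {p : ℝ × ℝ}
    (hf : DifferentiableAt ℝ f (flow t p)) :
    HasFDerivAt (fun q => f (flow t q)) ((fderiv ℝ f (flow t p)).comp (flowCLM t)) p := by
  have hflow := (flowCLM t).hasFDerivAt (x := p)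
  rw [coe_flowCLM] at hflow
  exact hf.hasFDerivAt.comp p hflow

-- The symbol bound on the derivative survives composition with the flow, uniformly in time, since
-- the flow preserves `x² + ξ²`.
theorem InC0S.exists_norm_fderiv_comp_flow_le {ρ : ℝ} {v : ℝ → ℝ × ℝ → ℝ} (hv : InC0S ρ v) :
    ∃ C > 0, ∀ t p, ‖fderiv ℝ (fun q => v t (flow t q)) p‖ ≤
      C * (1 + p.1 ^ 2 + p.2 ^ 2) ^ (ρ - 1 / 2) := by
  obtain ⟨C, hC, hbound⟩ := hv.exists_norm_fderiv_le
  refine ⟨C * 2, by positivity, fun t p => ?_⟩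
  have hderiv := hasFDerivAt_comp_flow ((hv.2.2.1 t).differentiable (by simp) (flow t p))
  calc ‖fderiv ℝ (fun q => v t (flow t q)) p‖
      ≤ ‖fderiv ℝ (v t) (flow t p)‖ * ‖flowCLM t‖ := by
        rw [hderiv.fderiv]
        exact ContinuousLinearMap.opNorm_comp_le _ _
    _ ≤ C * (1 + p.1 ^ 2 + p.2 ^ 2) ^ (ρ - 1 / 2) * 2 := by
        rw [add_assoc, ← flow_fst_sq_add_snd_sq t p, ← add_assoc]
        gcongr
        exacts [hbound t _, norm_flowCLM_le t]
    _ = C * 2 * (1 + p.1 ^ 2 + p.2 ^ 2) ^ (ρ - 1 / 2) := by ring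

theorem InC0S.differentiable_resAvg {ρ : ℝ} {v : ℝ → ℝ × ℝ → ℝ} (hv : InC0S ρ v) :
    Differentiable ℝ (resAvg v) := by
  intro p
  obtain ⟨C, hC, hbound⟩ := hv.exists_norm_fderiv_comp_flow_le
  obtain ⟨-, hcont, hsmooth, -⟩ := hv
  set weight : ℝ × ℝ → ℝ := fun q => (1 + q.1 ^ 2 + q.2 ^ 2) ^ (ρ - 1 / 2)
  have hweight : Continuous weight :=
    Continuous.rpow_const (by fun_prop) fun q => .inl (by positivity)
  have hmeas : Measurable fun t => fderiv ℝ (fun q => v t (flow t q)) p :=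
    (measurable_fderiv_with_param ℝ (f := fun t q => v t (flow t q))
      (hcont.comp (continuous_fst.prodMk continuous_flow))).comp
      (measurable_id.prodMk measurable_const)
  have hderiv (t : ℝ) (q : ℝ × ℝ) : DifferentiableAt ℝ (fun q => v t (flow t q)) q :=
    (hasFDerivAt_comp_flow ((hsmooth t).differentiable (by simp) _)).differentiableAt
  have hdominated (t : ℝ) (q : ℝ × ℝ) (hq : weight q < weight p + 1) :
      ‖fderiv ℝ (fun q => v t (flow t q)) q‖ ≤ C * (weight p + 1) :=
    (hbound t q).trans (mul_le_mul_of_nonneg_left hq.le hC.le)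
  have hint := intervalIntegral.hasFDerivAt_integral_of_dominated_of_fderiv_le
    (μ := volume) (a := 0) (b := 2 * π) (F' := fun q t => fderiv ℝ (fun q => v t (flow t q)) q)
    ((isOpen_lt hweight continuous_const).mem_nhds (lt_add_one (weight p)))
    (.of_forall fun q => (continuous_comp_flow hcont q).aestronglyMeasurable)
    ((continuous_comp_flow hcont p).intervalIntegrable _ _) hmeas.aestronglyMeasurable
    (.of_forall fun t _ => hdominated t) intervalIntegrable_const
    (.of_forall fun t _ q _ => (hderiv t q).hasFDerivAt)
  exact hint.differentiableAt.const_mul _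

/-! ### The Poisson bracket -/

theorem pbr_add_left {f g : ℝ × ℝ → ℝ} {p : ℝ × ℝ} (hf : DifferentiableAt ℝ f p)
    (hg : DifferentiableAt ℝ g p) (h : ℝ × ℝ → ℝ) : pbr (f + g) h p = pbr f h p + pbr g h p := by
  simp only [pbr, pdx, pdxi, fderiv_add hf hg, add_apply]
  ring

theorem pbr_smul_left (c : ℝ) (f h : ℝ × ℝ → ℝ) (p : ℝ × ℝ) :
    pbr (c • f) h p = c * pbr f h p := by
  simp only [pbr, pdx, pdxi, fderiv_const_smul_field, Pi.smul_apply,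
    smul_apply, smul_eq_mul]
  ring

theorem pbr_resAvg_add_smul {ρ σ : ℝ} {v w : ℝ → ℝ × ℝ → ℝ} (hv : InC0S ρ v) (hw : InC0S σ w)
    (c : ℝ) (h : ℝ × ℝ → ℝ) (p : ℝ × ℝ) :
    pbr (resAvg (v + c • w)) h p = pbr (resAvg v) h p + c * pbr (resAvg w) h p := by
  have hcw : InC0S σ (c • w) := hw.const_smul c
  rw [resAvg_add hv.2.1 hcw.2.1,
    pbr_add_left (hv.differentiable_resAvg p) (hcw.differentiable_resAvg p), resAvg_smul,
    pbr_smul_left]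

theorem pbr_h0 (f : ℝ × ℝ → ℝ) (p : ℝ × ℝ) : pbr f h0 p = p.1 * pdxi f p - p.2 * pdx f p := by
  have hh0 : HasFDerivAt h0 (p.1 • .fst ℝ ℝ ℝ + p.2 • .snd ℝ ℝ ℝ) p := by
    have h := (((hasFDerivAt_fst (𝕜 := ℝ) (p := p)).pow 2).add
      ((hasFDerivAt_snd (𝕜 := ℝ) (p := p)).pow 2)).mul_const (1 / 2 : ℝ)
    refine (h.congr_fderiv ?_).congr_of_eventuallyEq (.of_forall fun q => ?_)
    · ext <;> simp
    · simp [h0, div_eq_mul_inv]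
  have hx : pdx h0 p = p.1 := by simp [pdx, hh0.fderiv]
  have hξ : pdxi h0 p = p.2 := by simp [pdxi, hh0.fderiv]
  rw [pbr, hx, hξ]
  ring

theorem hasDerivAt_flow (t : ℝ) (p : ℝ × ℝ) :
    HasDerivAt (fun s => flow s p) ((flow t p).2, -(flow t p).1) t := by
  have hcos := hasDerivAt_cos t
  have hsin := hasDerivAt_sin t
  refine HasDerivAt.prodMk (((hcos.const_mul p.1).add (hsin.const_mul p.2)).congr_deriv ?_)
    (((hsin.const_mul (-p.1)).add (hcos.const_mul p.2)).congr_deriv ?_) <;>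
  · simp only [flow]
    ring

theorem hasDerivAt_along_flow {f : ℝ × ℝ → ℝ} {t : ℝ} {p : ℝ × ℝ}
    (hf : DifferentiableAt ℝ f (flow t p)) :
    HasDerivAt (fun s => f (flow s p)) (-pbr f h0 (flow t p)) t := by
  refine (hf.hasFDerivAt.comp_hasDerivAt t (hasDerivAt_flow t p)).congr_deriv ?_
  rw [fderiv_apply_eq_pdx_pdxi, pbr_h0]
  ring

/-! ### An explicit element of `𝒱` -/

/-- A smooth, rotation-invariant function on the phase space equal to `(x² + ξ²)^(-1/2)` outside
the unit disc. -/
def smoothInvRadius (p : ℝ × ℝ) : ℝ :=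
  (√(p.1 ^ 2 + p.2 ^ 2 + (1 - smoothTransition (p.1 ^ 2 + p.2 ^ 2))))⁻¹

theorem smoothInvRadius_of_one_le {p : ℝ × ℝ} (hp : 1 ≤ p.1 ^ 2 + p.2 ^ 2) :
    smoothInvRadius p = (√(p.1 ^ 2 + p.2 ^ 2))⁻¹ := by
  simp [smoothInvRadius, smoothTransition.one_of_one_le hp]

theorem smoothInvRadius_flow (t : ℝ) (p : ℝ × ℝ) :
    smoothInvRadius (flow t p) = smoothInvRadius p := by
  simp only [smoothInvRadius, flow_fst_sq_add_snd_sq]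

theorem contDiff_smoothInvRadius : ContDiff ℝ ∞ smoothInvRadius := by
  have hpos (p : ℝ × ℝ) :
      0 < p.1 ^ 2 + p.2 ^ 2 + (1 - smoothTransition (p.1 ^ 2 + p.2 ^ 2)) := by
    rcases lt_or_ge (p.1 ^ 2 + p.2 ^ 2) 1 with hp | hp
    · exact add_pos_of_nonneg_of_pos (by positivity)
        (sub_pos.2 (smoothTransition.lt_one_of_lt_one hp))
    · exact add_pos_of_pos_of_nonneg (by linarith) (sub_nonneg.2 (smoothTransition.le_one _))
  have hsq : ContDiff ℝ ∞ fun p : ℝ × ℝ => p.1 ^ 2 + p.2 ^ 2 := by fun_prop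
  exact ((hsq.add (contDiff_const.sub (smoothTransition.contDiff.comp hsq))).sqrt
    fun p => (hpos p).ne').inv fun p => (sqrt_pos.2 (hpos p)).ne'

/-- A smooth function on the phase space equal to the cosine `x / √(x² + ξ²)` of the polar angle
outside the unit disc. -/
def smoothCosAngle (p : ℝ × ℝ) : ℝ := p.1 * smoothInvRadius p

theorem contDiff_smoothCosAngle : ContDiff ℝ ∞ smoothCosAngle :=
  contDiff_fst.mul contDiff_smoothInvRadius

theorem posHomog0_smoothCosAngle : PosHomog0 smoothCosAngle := by
  intro lam p hlam hp
  have hscale : (lam * p.1) ^ 2 + (lam * p.2) ^ 2 = lam ^ 2 * (p.1 ^ 2 + p.2 ^ 2) := by ring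
  have hscaled : 1 ≤ (lam * p.1) ^ 2 + (lam * p.2) ^ 2 :=
    hscale ▸ one_le_mul_of_one_le_of_one_le (one_le_pow₀ hlam) hp
  rw [smoothCosAngle, smoothCosAngle, smoothInvRadius_of_one_le hp,
    smoothInvRadius_of_one_le hscaled, hscale, sqrt_mul (by positivity), sqrt_sq (by linarith)]
  field_simp

theorem smoothCosAngle_flow (t : ℝ) (p : ℝ × ℝ) :
    smoothCosAngle (flow t p) = (flow t p).1 * smoothInvRadius p := by
  rw [smoothCosAngle, smoothInvRadius_flow]

theorem pbr_smoothCosAngle_h0 (p : ℝ × ℝ) :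
    pbr smoothCosAngle h0 p = -(p.2 * smoothInvRadius p) := by
  have hbracket := hasDerivAt_along_flow (t := 0) (p := p)
    (contDiff_smoothCosAngle.differentiable (by simp) _)
  have hexplicit := (hasFDerivAt_fst.comp_hasDerivAt 0 (hasDerivAt_flow 0 p)).mul_const
    (smoothInvRadius p)
  simp only [smoothCosAngle_flow] at hbracket
  have hunique := hbracket.unique hexplicit
  simp only [flow_zero, ContinuousLinearMap.coe_fst'] at hunique
  linarith

theorem resAvg_cos_smul_smoothCosAngle :
    resAvg (fun t => cos t • smoothCosAngle) = (1 / 2 : ℝ) • smoothCosAngle := by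
  funext p
  have hintegrand (t : ℝ) : cos t * smoothCosAngle (flow t p) =
      smoothInvRadius p * p.1 * cos t ^ 2 + smoothInvRadius p * p.2 * (sin t * cos t) := by
    rw [smoothCosAngle_flow, flow]
    ring
  simp only [resAvg, Pi.smul_apply, smul_eq_mul, hintegrand]
  rw [intervalIntegral.integral_add (Continuous.intervalIntegrable (by fun_prop) _ _)
      (Continuous.intervalIntegrable (by fun_prop) _ _),
    intervalIntegral.integral_const_mul, intervalIntegral.integral_const_mul, integral_cos_sq,
    integral_sin_mul_cos₁, smoothCosAngle]
  simp only [cos_two_pi, sin_two_pi, cos_zero, sin_zero]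
  field_simp
  ring

theorem inV_cos_smul_smoothCosAngle : InV fun t => cos t • smoothCosAngle := by
  have hsymbol : InC0S 0 fun t => cos t • smoothCosAngle :=
    (posHomog0_smoothCosAngle.inC0S contDiff_smoothCosAngle).periodic_smul continuous_cos
      cos_periodic
  refine ⟨hsymbol, fun t => cos t • smoothCosAngle, -1, by norm_num, hsymbol.2.2.1,
    fun t lam p hlam hp => ?_, ?_, (0, 1), by norm_num, ?_⟩
  · exact congrArg (cos t • ·) (posHomog0_smoothCosAngle lam p hlam hp)
  · simp only [sub_self]
    exact inC0S_zero (-1)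
  · rw [resAvg_cos_smul_smoothCosAngle, pbr_smul_left, pbr_smoothCosAngle_h0,
      smoothInvRadius_of_one_le (by norm_num)]
    norm_num

/-! ### Density -/

theorem eventually_add_mul_ne_zero (a : ℝ) {b : ℝ} (hb : b ≠ 0) :
    ∀ᶠ δ in 𝓝[≠] (0 : ℝ), a + δ * b ≠ 0 := by
  have hne : ∀ᶠ δ in 𝓝[≠] (0 : ℝ), δ ≠ -a / b :=
    nhdsNE_le_cofinite 0 (eventually_cofinite_ne _)
  filter_upwards [hne] with δ hδ h
  exact hδ (by rw [eq_div_iff hb]; linarith)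

theorem InC0Scl.eventually_inV_add_smul {v g : ℝ → ℝ × ℝ → ℝ} (hv : InC0Scl v) (hg : InV g) :
    ∀ᶠ δ in 𝓝[≠] (0 : ℝ), InV (v + δ • g) := by
  obtain ⟨hv, v0, μ, hμ, hv_smooth, hv_hom, hv_diff⟩ := hv
  obtain ⟨hg, g0, ν, hν, hg_smooth, hg_hom, hg_diff, p, hp, hbracket⟩ := hg
  have hv0 : IsPrincipalSymbol v0 v := ⟨hv_smooth, hv_hom, μ, hμ, hv_diff⟩
  have hg0 : IsPrincipalSymbol g0 g := ⟨hg_smooth, hg_hom, ν, hν, hg_diff⟩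
  filter_upwards [eventually_add_mul_ne_zero (pbr (resAvg v0) h0 p) hbracket] with δ hδ
  obtain ⟨hsmooth, hhom, κ, hκ, hdiff⟩ := hv0.add_smul hg0 δ
  refine ⟨hv.add (hg.const_smul δ), v0 + δ • g0, κ, hκ, hsmooth, hhom, hdiff, p, hp, ?_⟩
  rwa [pbr_resAvg_add_smul (hv0.inC0S hv) (hg0.inC0S hg)]

/-- The set `𝒱` is dense in `(C⁰_r(𝕋,S⁰_cl), d^{0,0})`. -/
theorem V_is_dense :
    ∀ v : ℝ → ℝ × ℝ → ℝ, InC0Scl v → ∀ ε : ℝ, 0 < ε →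
      ∃ w : ℝ → ℝ × ℝ → ℝ, InV w ∧ dist00 v w < ε := by
  intro v hv ε hε
  have hdist := (tendsto_dist00_add_smul v fun t => cos t • smoothCosAngle).eventually_lt_const hε
  obtain ⟨δ, hInV, hδ⟩ := ((hv.eventually_inV_add_smul inV_cos_smul_smoothCosAngle).and
    (hdist.filter_mono nhdsWithin_le_nhds)).exists
  exact ⟨_, hInV, hδ⟩

end
end

section
/- Anti-Wick quantization is well defined, bounded and positivity preserving: let a : ℝ² → ℝ be measurable and bounded. Then for all u, w ∈ L²(ℝ,ℂ) the function (q,p) ↦ a(q,p)·⟨u,Φ_{(q,p)}⟩·⟨Φ_{(q,p)},w⟩ is integrable on ℝ², and there exists a unique bounded linear operator Op^{aw}(a) on L²(ℝ,ℂ) such that ⟨Op^{aw}(a)u, w⟩ = ∫_{ℝ²} a(q,p)·⟨u,Φ_{(q,p)}⟩·⟨Φ_{(q,p)},w⟩ dq dp for all u,w. Moreover, if a(q,p) ≥ 0 for all (q,p) then ⟨Op^{aw}(a)u, u⟩ ≥ 0 for every u ∈ L²(ℝ,ℂ). -/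
open Real MeasureTheory

noncomputable section

/-- The coherent state `Φ_z = 𝒯_z Φ₀`, where `Φ₀(x) = π^{-1/4} e^{-x²/2}` and
`(𝒯_{(q,p)}u)(x) = e^{-ipq/2} e^{ixp} u(x-q)`. -/
def coh (z : ℝ × ℝ) (x : ℝ) : ℂ :=
  Complex.exp (-(Complex.I * z.2 * z.1) / 2) * Complex.exp (Complex.I * x * z.2) *
    ((Real.pi ^ (-(1 : ℝ) / 4) : ℝ) : ℂ) * ((Real.exp (-(x - z.1) ^ 2 / 2) : ℝ) : ℂ)

/-- The `L²` pairing `⟨u,v⟩ = ∫ u(x) conj(v(x)) dx`, linear in the first argument. -/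
def pair (u v : ℝ → ℂ) : ℂ := ∫ x : ℝ, u x * (starRingEnd ℂ) (v x)

/-!
Up to a phase, `⟨u, Φ_{(q,p)}⟩` is the Fourier transform at frequency `p / 2π` of `u` multiplied by
the Gaussian window centred at `q`. Plancherel's theorem in the frequency variable, followed by
Tonelli's theorem in `(q, x)`, therefore gives `‖⟨u, Φ_z⟩‖_{L²(dz)} = √(2π) ‖u‖`: the transform
`W u (z) = ⟨u, Φ_z⟩` is bounded from `L²(ℝ)` to `L²(ℝ²)`. The operator sought is
`W* ∘ (multiplication by a) ∘ W`, and positivity is read off from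
`⟨Op(a) u, u⟩ = ∫ a(z) |⟨u, Φ_z⟩|² dz`.
-/

open scoped FourierTransform SchwartzMap ENNReal InnerProductSpace ComplexConjugate

theorem eLpNorm_two_sq {α ε : Type*} [MeasurableSpace α] [TopologicalSpace ε]
    [ContinuousENorm ε] (f : α → ε) (μ : Measure α) :
    eLpNorm f 2 μ ^ 2 = ∫⁻ x, ‖f x‖ₑ ^ 2 ∂μ := by
  simpa using eLpNorm_nnreal_pow_eq_lintegral (f := f) (μ := μ) (p := 2) two_ne_zero

theorem map_prodMap_id_mul_left {α : Type*} [MeasurableSpace α] (μ : Measure α) [SFinite μ]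
    {c : ℝ} (hc : c ≠ 0) :
    (μ.prod volume).map (Prod.map id (c * ·)) = ENNReal.ofReal |c⁻¹| • μ.prod volume := by
  rw [← Measure.map_prod_map _ _ measurable_id (measurable_const_mul c), Measure.map_id,
    Real.map_volume_mul_left hc, Measure.prod_smul_right]

section Plancherel

variable {V F : Type*} [NormedAddCommGroup V] [InnerProductSpace ℝ V] [FiniteDimensional ℝ V]
  [MeasurableSpace V] [BorelSpace V] [NormedAddCommGroup F]

open scoped ContDiff in
theorem ae_eq_of_forall_integral_schwartz_smul_eq [NormedSpace ℂ F] [CompleteSpace F]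
    {μ : Measure V} {f g : V → F} (hf : LocallyIntegrable f μ) (hg : LocallyIntegrable g μ)
    (h : ∀ φ : 𝓢(V, ℂ), ∫ x, φ x • f x ∂μ = ∫ x, φ x • g x ∂μ) : f =ᵐ[μ] g := by
  refine ae_eq_of_integral_contDiff_smul_eq hf hg fun ψ ψ_smooth ψ_supp ↦ ?_
  have hψ_supp : HasCompactSupport (Complex.ofRealCLM ∘ ψ) := ψ_supp.comp_left rfl
  have hψ_smooth : ContDiff ℝ ∞ (Complex.ofRealCLM ∘ ψ) := by fun_prop
  simpa using h (hψ_supp.toSchwartzMap hψ_smooth)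

theorem continuous_fourier_of_integrable [NormedSpace ℂ F] {f : V → F} (hf : Integrable f) :
    Continuous (𝓕 f) :=
  VectorFourier.fourierIntegral_continuous Real.continuous_fourierChar
    (L := innerₗ V) continuous_inner hf

theorem integral_schwartz_smul_fourier [NormedSpace ℂ F] [CompleteSpace F] {f : V → F}
    (hf : Integrable f) (φ : 𝓢(V, ℂ)) :
    ∫ x, φ x • 𝓕 f x = ∫ x, 𝓕 φ x • f x := by
  simpa using! (VectorFourier.integral_fourierIntegral_smul_eq_flip (L := innerₗ V)
    Real.continuous_fourierChar continuous_inner φ.integrable hf).symm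

variable [InnerProductSpace ℂ F] [CompleteSpace F]

theorem integral_schwartz_smul_fourier_Lp (h : Lp F 2 (volume : Measure V)) (φ : 𝓢(V, ℂ)) :
    ∫ x, φ x • (𝓕 h : Lp F 2 (volume : Measure V)) x = ∫ x, 𝓕 φ x • h x := by
  simpa using! congrArg (· φ) (Lp.fourier_toTemperedDistribution_eq h).symm

theorem fourier_Lp_ae_eq_fourier_iff {f : V → F} (hf : Integrable f)
    (h : Lp F 2 (volume : Measure V)) :
    (𝓕 h : Lp F 2 (volume : Measure V)) =ᵐ[volume] 𝓕 f ↔ h =ᵐ[volume] f := by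
  have locInt (k : Lp F 2 (volume : Measure V)) : LocallyIntegrable k :=
    (Lp.memLp k).locallyIntegrable one_le_two
  constructor
  · intro heq
    refine ae_eq_of_forall_integral_schwartz_smul_eq (locInt h) hf.locallyIntegrable fun φ ↦ ?_
    obtain ⟨ψ, rfl⟩ : ∃ ψ : 𝓢(V, ℂ), 𝓕 ψ = φ :=
      ⟨𝓕⁻ φ, FourierTransform.fourier_fourierInv_eq φ⟩
    rw [← integral_schwartz_smul_fourier_Lp, ← integral_schwartz_smul_fourier hf]
    exact integral_congr_ae (heq.mono fun x hx ↦ congrArg _ hx)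
  · intro heq
    refine ae_eq_of_forall_integral_schwartz_smul_eq (locInt (𝓕 h))
      (continuous_fourier_of_integrable hf).locallyIntegrable fun φ ↦ ?_
    rw [integral_schwartz_smul_fourier_Lp, integral_schwartz_smul_fourier hf]
    exact integral_congr_ae (heq.mono fun x hx ↦ congrArg _ hx)

theorem eLpNorm_fourier_of_integrable {f : V → F} (hf : Integrable f) :
    eLpNorm (𝓕 f) 2 volume = eLpNorm f 2 volume := by
  by_cases hex : ∃ h : Lp F 2 (volume : Measure V), h =ᵐ[volume] f
  · obtain ⟨h, heq⟩ := hex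
    rw [← eLpNorm_congr_ae ((fourier_Lp_ae_eq_fourier_iff hf h).2 heq), ← eLpNorm_congr_ae heq,
      ← Lp.enorm_def, ← Lp.enorm_def, ← ofReal_norm, ← ofReal_norm, Lp.norm_fourier_eq]
  · -- If either of `f` and `𝓕 f` is in `L²`, then so is the other: here both norms are infinite.
    have hf_top : eLpNorm f 2 volume = ∞ := by
      by_contra hne
      have hmem : MemLp f 2 := ⟨hf.1, lt_top_iff_ne_top.2 hne⟩
      exact hex ⟨hmem.toLp f, hmem.coeFn_toLp⟩
    have hFf_top : eLpNorm (𝓕 f) 2 volume = ∞ := by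
      by_contra hne
      have hmem : MemLp (𝓕 f) 2 :=
        ⟨(continuous_fourier_of_integrable hf).aestronglyMeasurable, lt_top_iff_ne_top.2 hne⟩
      refine hex ⟨𝓕⁻ (hmem.toLp (𝓕 f)), (fourier_Lp_ae_eq_fourier_iff hf _).1 ?_⟩
      rw [FourierTransform.fourier_fourierInv_eq]
      exact hmem.coeFn_toLp
    rw [hf_top, hFf_top]

end Plancherel

section ShortTimeFourier

variable {V : Type*} [NormedAddCommGroup V] [InnerProductSpace ℝ V] [FiniteDimensional ℝ V]
  [MeasurableSpace V] [BorelSpace V] {g u : V → ℂ}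

/-- The short-time Fourier transform of `u` with window `g` at the phase space point `z = (q, ω)`:
the Fourier transform at frequency `ω`, in the normalization `e^{-2πi⟨x, ω⟩}`, of `u` localized
near `q` by the translated window `g(· - q)`. -/
def shortTimeFourier (g u : V → ℂ) (z : V × V) : ℂ :=
  𝓕 (fun x ↦ u x * conj (g (x - z.1))) z.2

theorem aestronglyMeasurable_mul_conj_sub (hg : AEStronglyMeasurable g)
    (hu : AEStronglyMeasurable u) :
    AEStronglyMeasurable (fun y : V × V ↦ u y.2 * conj (g (y.2 - y.1))) := by
  have hsub : Measure.QuasiMeasurePreserving (fun y : V × V ↦ y.2 - y.1) :=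
    (quasiMeasurePreserving_sub_of_right_invariant volume volume).comp
      Measure.measurePreserving_swap.quasiMeasurePreserving
  exact (hu.comp_quasiMeasurePreserving Measure.quasiMeasurePreserving_snd).mul
    (Complex.continuous_conj.comp_aestronglyMeasurable (hg.comp_quasiMeasurePreserving hsub))

theorem aestronglyMeasurable_shortTimeFourier (hg : AEStronglyMeasurable g)
    (hu : AEStronglyMeasurable u) : AEStronglyMeasurable (shortTimeFourier g u) := by
  have hproj : Measure.QuasiMeasurePreserving (fun y : (V × V) × V ↦ (y.1.1, y.2)) :=
    QuasiMeasurePreserving.prodMap Measure.quasiMeasurePreserving_fst (.id volume)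
  have hchar : Continuous fun y : (V × V) × V ↦ Real.fourierChar (-⟪y.2, y.1.2⟫_ℝ) :=
    Real.continuous_fourierChar.comp (by fun_prop)
  refine AEStronglyMeasurable.integral_prod_right'
    (f := fun y : (V × V) × V ↦
      Real.fourierChar (-⟪y.2, y.1.2⟫_ℝ) • (u y.2 * conj (g (y.2 - y.1.1)))) ?_
  exact hchar.aestronglyMeasurable.smul
    ((aestronglyMeasurable_mul_conj_sub hg hu).comp_quasiMeasurePreserving hproj)

theorem lintegral_enorm_shortTimeFourier_sq_right (hg : MemLp g 2) (hu : MemLp u 2) (q : V) :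
    ∫⁻ ω, ‖shortTimeFourier g u (q, ω)‖ₑ ^ 2 = ∫⁻ x, ‖u x‖ₑ ^ 2 * ‖g (x - q)‖ₑ ^ 2 := by
  have hg_q : MemLp (fun x ↦ conj (g (x - q))) 2 :=
    (hg.comp_measurePreserving (measurePreserving_sub_right volume q)).star
  have hint : Integrable fun x ↦ u x * conj (g (x - q)) := hu.integrable_mul hg_q
  simp only [shortTimeFourier]
  rw [← eLpNorm_two_sq, eLpNorm_fourier_of_integrable hint, eLpNorm_two_sq]
  simp only [enorm_mul, RCLike.enorm_conj, mul_pow]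

theorem eLpNorm_shortTimeFourier (hg : MemLp g 2) (hu : MemLp u 2) :
    eLpNorm (shortTimeFourier g u) 2 volume = eLpNorm g 2 volume * eLpNorm u 2 volume := by
  have hmeas : AEMeasurable fun y : V × V ↦ ‖u y.2‖ₑ ^ 2 * ‖g (y.2 - y.1)‖ₑ ^ 2 := by
    simpa only [enorm_mul, RCLike.enorm_conj, mul_pow] using
      (aestronglyMeasurable_mul_conj_sub hg.1 hu.1).enorm.pow_const (2 : ℕ)
  refine (ENNReal.pow_right_strictMono two_ne_zero).injective ?_
  calc eLpNorm (shortTimeFourier g u) 2 volume ^ 2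
      = ∫⁻ q, ∫⁻ ω, ‖shortTimeFourier g u (q, ω)‖ₑ ^ 2 := by
        rw [eLpNorm_two_sq, Measure.volume_eq_prod, lintegral_prod _
          ((aestronglyMeasurable_shortTimeFourier hg.1 hu.1).enorm.pow_const 2)]
    _ = ∫⁻ q, ∫⁻ x, ‖u x‖ₑ ^ 2 * ‖g (x - q)‖ₑ ^ 2 := by
        simp only [lintegral_enorm_shortTimeFourier_sq_right hg hu]
    _ = ∫⁻ x, ∫⁻ q, ‖u x‖ₑ ^ 2 * ‖g (x - q)‖ₑ ^ 2 := lintegral_lintegral_swap hmeas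
    _ = ∫⁻ x, ‖u x‖ₑ ^ 2 * eLpNorm g 2 volume ^ 2 := by
        refine lintegral_congr fun x ↦ ?_
        rw [lintegral_const_mul' _ _ (ENNReal.pow_ne_top enorm_ne_top),
          lintegral_sub_left_eq_self (fun y ↦ ‖g y‖ₑ ^ 2) x, eLpNorm_two_sq]
    _ = (eLpNorm g 2 volume * eLpNorm u 2 volume) ^ 2 := by
        rw [lintegral_mul_const' _ _ (ENNReal.pow_ne_top hg.2.ne), ← eLpNorm_two_sq, mul_pow,
          mul_comm]

end ShortTimeFourier

theorem pair_eq_inner (u w : Lp ℂ 2 (volume : Measure ℝ)) : pair u w = ⟪w, u⟫_ℂ := by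
  rw [L2.inner_def]
  rfl

theorem conj_pair (u v : ℝ → ℂ) : conj (pair u v) = pair v u := by
  simp only [pair, ← integral_conj, map_mul, Complex.conj_conj, mul_comm]

theorem pair_mul_pair_swap (u v : ℝ → ℂ) : pair u v * pair v u = (‖pair u v‖ : ℂ) ^ 2 := by
  rw [← conj_pair u, Complex.mul_conj']

theorem pair_eq_inner_toLp (u : Lp ℂ 2 (volume : Measure ℝ)) {f : ℝ → ℂ} (hf : MemLp f 2) :
    pair u f = ⟪hf.toLp f, u⟫_ℂ := by
  rw [← pair_eq_inner]
  exact integral_congr_ae (hf.coeFn_toLp.mono fun x hx ↦ by simp only [hx])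

theorem continuous_uncurry_coh : Continuous (Function.uncurry coh) := by
  unfold Function.uncurry coh
  fun_prop

theorem norm_coh (z : ℝ × ℝ) (x : ℝ) :
    ‖coh z x‖ = π ^ (-(1 : ℝ) / 4) * rexp (-(x - z.1) ^ 2 / 2) := by
  have norm_translation_phase : ‖Complex.exp (-(Complex.I * z.2 * z.1) / 2)‖ = 1 := by
    simp [Complex.norm_exp]
  have norm_modulation : ‖Complex.exp (Complex.I * x * z.2)‖ = 1 := by
    simp [Complex.norm_exp]
  rw [coh, norm_mul, norm_mul, norm_mul, norm_translation_phase, norm_modulation,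
    Complex.norm_of_nonneg (by positivity), Complex.norm_of_nonneg (by positivity), one_mul,
    one_mul]

theorem enorm_coh_sq (z : ℝ × ℝ) (x : ℝ) :
    ‖coh z x‖ₑ ^ 2 = ProbabilityTheory.gaussianPDF z.1 2⁻¹ x := by
  have norm_sq : ‖coh z x‖ ^ 2 = ProbabilityTheory.gaussianPDFReal z.1 2⁻¹ x := by
    rw [norm_coh, mul_pow, ← Real.rpow_mul_natCast pi_pos.le, ← Real.exp_nat_mul,
      ProbabilityTheory.gaussianPDFReal, Real.sqrt_eq_rpow, ← Real.rpow_neg (by positivity)]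
    push_cast
    ring_nf
  rw [ProbabilityTheory.gaussianPDF, ← norm_sq, ENNReal.ofReal_pow (norm_nonneg _), ofReal_norm]

theorem eLpNorm_coh (z : ℝ × ℝ) : eLpNorm (coh z) 2 volume = 1 := by
  refine (ENNReal.pow_right_strictMono two_ne_zero).injective ?_
  simp only [eLpNorm_two_sq, enorm_coh_sq, one_pow]
  exact ProbabilityTheory.lintegral_gaussianPDF_eq_one _ (by norm_num)

theorem memLp_coh (z : ℝ × ℝ) : MemLp (coh z) 2 :=
  ⟨(continuous_uncurry_coh.uncurry_left z).aestronglyMeasurable, by simp [eLpNorm_coh]⟩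

theorem coh_eq_mul_coh_zero (z : ℝ × ℝ) (x : ℝ) :
    coh z x =
      Complex.exp (-(Complex.I * z.2 * z.1) / 2) * Complex.exp (Complex.I * x * z.2) *
        coh 0 (x - z.1) := by
  simp [coh, mul_assoc]

theorem pair_coh_eq_shortTimeFourier (u : ℝ → ℂ) (z : ℝ × ℝ) :
    pair u (coh z) =
      Complex.exp (Complex.I * z.2 * z.1 / 2) *
        shortTimeFourier (coh 0) u (z.1, (2 * π)⁻¹ * z.2) := by
  have rescale (x : ℝ) : -2 * π * x * ((2 * π)⁻¹ * z.2) = -(x * z.2) := by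
    field_simp
  have conj_coh (x : ℝ) : conj (coh z x) =
      Complex.exp (Complex.I * z.2 * z.1 / 2) *
        (Complex.exp (↑(-2 * π * x * ((2 * π)⁻¹ * z.2)) * Complex.I) *
          conj (coh 0 (x - z.1))) := by
    rw [coh_eq_mul_coh_zero, rescale]
    simp only [map_mul, ← Complex.exp_conj, map_neg, map_div₀, Complex.conj_I,
      Complex.conj_ofReal, Complex.conj_ofNat]
    push_cast
    ring_nf
  rw [pair, shortTimeFourier, Real.fourier_real_eq_integral_exp_smul, ← integral_const_mul]
  refine integral_congr_ae (.of_forall fun x ↦ ?_)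
  simp only [conj_coh, smul_eq_mul]
  ring

theorem aestronglyMeasurable_pair_coh {u : ℝ → ℂ} (hu : AEStronglyMeasurable u) :
    AEStronglyMeasurable fun z ↦ pair u (coh z) := by
  have hcoh : AEStronglyMeasurable (fun y : (ℝ × ℝ) × ℝ ↦ conj (coh y.1 y.2)) :=
    (Complex.continuous_conj.comp continuous_uncurry_coh).aestronglyMeasurable
  exact ((hu.comp_quasiMeasurePreserving Measure.quasiMeasurePreserving_snd).mul
    hcoh).integral_prod_right'

theorem enorm_pair_coh (u : ℝ → ℂ) (z : ℝ × ℝ) :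
    ‖pair u (coh z)‖ₑ = ‖shortTimeFourier (coh 0) u (z.1, (2 * π)⁻¹ * z.2)‖ₑ := by
  have norm_phase : ‖Complex.exp (Complex.I * z.2 * z.1 / 2)‖ = 1 := by simp [Complex.norm_exp]
  rw [pair_coh_eq_shortTimeFourier, enorm_mul, ← ofReal_norm (Complex.exp _), norm_phase,
    ENNReal.ofReal_one, one_mul]

theorem eLpNorm_pair_coh {u : ℝ → ℂ} (hu : MemLp u 2) :
    eLpNorm (fun z ↦ pair u (coh z)) 2 volume = ENNReal.ofReal √(2 * π) * eLpNorm u 2 volume := by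
  have hmap : (volume : Measure (ℝ × ℝ)).map (Prod.map id ((2 * π)⁻¹ * ·)) =
      ENNReal.ofReal (2 * π) • volume := by
    rw [Measure.volume_eq_prod, map_prodMap_id_mul_left _ (by positivity), inv_inv,
      abs_of_pos (by positivity)]
  have hmeas : AEStronglyMeasurable (shortTimeFourier (coh 0) u)
      ((volume : Measure (ℝ × ℝ)).map (Prod.map id ((2 * π)⁻¹ * ·))) :=
    hmap ▸ (aestronglyMeasurable_shortTimeFourier (memLp_coh 0).1 hu.1).smul_measure _
  calc eLpNorm (fun z ↦ pair u (coh z)) 2 volume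
      = eLpNorm (shortTimeFourier (coh 0) u ∘ Prod.map id ((2 * π)⁻¹ * ·)) 2 volume :=
        eLpNorm_congr_enorm_ae (.of_forall fun z ↦ enorm_pair_coh u z)
    _ = eLpNorm (shortTimeFourier (coh 0) u) 2 (ENNReal.ofReal (2 * π) • volume) := by
        rw [← eLpNorm_map_measure hmeas (by fun_prop), hmap]
    _ = ENNReal.ofReal √(2 * π) * eLpNorm u 2 volume := by
        rw [eLpNorm_smul_measure_of_ne_top (by simp), eLpNorm_shortTimeFourier (memLp_coh 0) hu,
          eLpNorm_coh, one_mul, smul_eq_mul, Real.sqrt_eq_rpow,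
          ← ENNReal.ofReal_rpow_of_pos (by positivity)]
        norm_num

theorem memLp_pair_coh {u : ℝ → ℂ} (hu : MemLp u 2) : MemLp (fun z ↦ pair u (coh z)) 2 :=
  ⟨aestronglyMeasurable_pair_coh hu.1,
    eLpNorm_pair_coh hu ▸ ENNReal.mul_lt_top ENNReal.ofReal_lt_top hu.2⟩

theorem norm_toLp_pair_coh (u : Lp ℂ 2 (volume : Measure ℝ)) :
    ‖(memLp_pair_coh (Lp.memLp u)).toLp‖ = √(2 * π) * ‖u‖ := by
  rw [Lp.norm_toLp, eLpNorm_pair_coh (Lp.memLp u), ENNReal.toReal_mul,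
    ENNReal.toReal_ofReal (by positivity), Lp.norm_def]

/-- The coherent state transform `u ↦ (z ↦ ⟨u, Φ_z⟩)`, which identifies `L²(ℝ)` up to the factor
`√(2π)` with a closed subspace of `L²(ℝ²)`. -/
def cohTransform :
    Lp ℂ 2 (volume : Measure ℝ) →L[ℂ] Lp ℂ 2 (volume : Measure (ℝ × ℝ)) :=
  LinearMap.mkContinuous
    { toFun := fun u ↦ (memLp_pair_coh (Lp.memLp u)).toLp
      map_add' := fun u v ↦ by
        simp only [pair_eq_inner_toLp _ (memLp_coh _), inner_add_right]
        rfl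
      map_smul' := fun c u ↦ by
        simp only [pair_eq_inner_toLp _ (memLp_coh _), inner_smul_right]
        rfl }
    √(2 * π) fun u ↦ (norm_toLp_pair_coh u).le

theorem coeFn_cohTransform (u : Lp ℂ 2 (volume : Measure ℝ)) :
    cohTransform u =ᵐ[volume] fun z ↦ pair u (coh z) :=
  (memLp_pair_coh (Lp.memLp u)).coeFn_toLp

section AntiWick

/-- The anti-Wick operator with symbol `a ∈ L^∞(ℝ²)`: apply the coherent state transform, multiply
by `a`, and return to `L²(ℝ)` by the adjoint transform. -/
def antiWickOp (a : Lp ℂ ∞ (volume : Measure (ℝ × ℝ))) :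
    Lp ℂ 2 (volume : Measure ℝ) →L[ℂ] Lp ℂ 2 (volume : Measure ℝ) :=
  cohTransform.adjoint ∘L
    (ContinuousLinearMap.lsmul ℂ ℂ).holderL volume ∞ 2 2 a ∘L cohTransform

theorem inner_antiWickOp (a : Lp ℂ ∞ (volume : Measure (ℝ × ℝ)))
    (u w : Lp ℂ 2 (volume : Measure ℝ)) :
    ⟪w, antiWickOp a u⟫_ℂ = ⟪cohTransform w, a • cohTransform u⟫_ℂ := by
  rw [antiWickOp, ContinuousLinearMap.comp_apply, ContinuousLinearMap.adjoint_inner_right,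
    ContinuousLinearMap.comp_apply]
  rfl

theorem inner_cohTransform_smul_ae_eq {a : ℝ × ℝ → ℂ} (ha : MemLp a ∞)
    (u w : Lp ℂ 2 (volume : Measure ℝ)) :
    (fun z ↦ ⟪cohTransform w z, (ha.toLp a • cohTransform u : Lp ℂ 2 volume) z⟫_ℂ)
      =ᵐ[volume] fun z ↦ a z * pair u (coh z) * pair (coh z) w := by
  filter_upwards [coeFn_cohTransform u, coeFn_cohTransform w, ha.coeFn_toLp,
    Lp.coeFn_lpSMul (r := 2) (ha.toLp a) (cohTransform u)] with z hu hw haz hsmul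
  rw [hsmul, Pi.smul_apply', haz, hu, hw, RCLike.inner_apply, conj_pair, smul_eq_mul]

theorem integrable_mul_pair_coh_mul_pair_coh {a : ℝ × ℝ → ℂ} (ha : MemLp a ∞)
    (u w : Lp ℂ 2 (volume : Measure ℝ)) :
    Integrable fun z ↦ a z * pair u (coh z) * pair (coh z) w :=
  (L2.integrable_inner _ _).congr (inner_cohTransform_smul_ae_eq ha u w)

theorem pair_antiWickOp {a : ℝ × ℝ → ℂ} (ha : MemLp a ∞)
    (u w : Lp ℂ 2 (volume : Measure ℝ)) :
    pair (antiWickOp (ha.toLp a) u) w = ∫ z, a z * pair u (coh z) * pair (coh z) w := by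
  rw [pair_eq_inner, inner_antiWickOp, L2.inner_def]
  exact integral_congr_ae (inner_cohTransform_smul_ae_eq ha u w)

theorem eq_of_forall_pair_eq
    {S T : Lp ℂ 2 (volume : Measure ℝ) →L[ℂ] Lp ℂ 2 (volume : Measure ℝ)}
    (h : ∀ u w : Lp ℂ 2 (volume : Measure ℝ), pair (S u) w = pair (T u) w) : S = T :=
  ContinuousLinearMap.ext fun u ↦ ext_inner_left ℂ fun w ↦ by simpa only [pair_eq_inner] using h u w

open scoped ComplexOrder

theorem integral_mul_pair_coh_self_nonneg {a : ℝ × ℝ → ℂ} (ha : ∀ᵐ z, 0 ≤ a z) (u : ℝ → ℂ) :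
    0 ≤ ∫ z, a z * pair u (coh z) * pair (coh z) u := by
  simp only [mul_assoc, pair_mul_pair_swap]
  exact integral_nonneg_of_ae (ha.mono fun z hz ↦
    mul_nonneg hz (pow_nonneg (Complex.zero_le_real.2 (norm_nonneg _)) 2))

theorem antiWick_quantization_general {a : ℝ × ℝ → ℂ} (ha : MemLp a ∞) :
    (∀ u w : Lp ℂ 2 (volume : Measure ℝ),
      Integrable fun z ↦ a z * pair u (coh z) * pair (coh z) w) ∧
    (∃! T : Lp ℂ 2 (volume : Measure ℝ) →L[ℂ] Lp ℂ 2 (volume : Measure ℝ),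
      ∀ u w : Lp ℂ 2 (volume : Measure ℝ),
        pair (T u) w = ∫ z, a z * pair u (coh z) * pair (coh z) w) ∧
    (∀ T : Lp ℂ 2 (volume : Measure ℝ) →L[ℂ] Lp ℂ 2 (volume : Measure ℝ),
      (∀ u w : Lp ℂ 2 (volume : Measure ℝ),
        pair (T u) w = ∫ z, a z * pair u (coh z) * pair (coh z) w) →
      (∀ᵐ z, 0 ≤ a z) → ∀ u : Lp ℂ 2 (volume : Measure ℝ), 0 ≤ pair (T u) u) :=
  ⟨integrable_mul_pair_coh_mul_pair_coh ha,
    ⟨antiWickOp (ha.toLp a), pair_antiWickOp ha, fun _ hT ↦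
      eq_of_forall_pair_eq fun u w ↦ (hT u w).trans (pair_antiWickOp ha u w).symm⟩,
    fun _ hT ha_nonneg u ↦ hT u u ▸ integral_mul_pair_coh_self_nonneg ha_nonneg u⟩

end AntiWick

/-- Anti-Wick quantization of a bounded measurable symbol is well
defined as a bounded operator on `L²(ℝ,ℂ)` and is positivity preserving. -/
theorem antiWick_quantization (a : ℝ × ℝ → ℝ) (hmeas : Measurable a)
    (hbd : ∃ C : ℝ, ∀ z : ℝ × ℝ, |a z| ≤ C) :
    -- integrability of the anti-Wick pairing
    (∀ u w : Lp ℂ 2 (volume : Measure ℝ),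
      Integrable (fun z : ℝ × ℝ =>
        (a z : ℂ) * pair (⇑u) (coh z) * pair (coh z) (⇑w))) ∧
    -- existence and uniqueness of the bounded operator Op^aw(a)
    (∃! T : Lp ℂ 2 (volume : Measure ℝ) →L[ℂ] Lp ℂ 2 (volume : Measure ℝ),
      ∀ u w : Lp ℂ 2 (volume : Measure ℝ),
        pair (⇑(T u)) (⇑w) =
          ∫ z : ℝ × ℝ, (a z : ℂ) * pair (⇑u) (coh z) * pair (coh z) (⇑w)) ∧
    -- positivity
    (∀ T : Lp ℂ 2 (volume : Measure ℝ) →L[ℂ] Lp ℂ 2 (volume : Measure ℝ),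
      (∀ u w : Lp ℂ 2 (volume : Measure ℝ),
        pair (⇑(T u)) (⇑w) =
          ∫ z : ℝ × ℝ, (a z : ℂ) * pair (⇑u) (coh z) * pair (coh z) (⇑w)) →
      (∀ z : ℝ × ℝ, 0 ≤ a z) →
      ∀ u : Lp ℂ 2 (volume : Measure ℝ),
        0 ≤ (pair (⇑(T u)) (⇑u)).re ∧ (pair (⇑(T u)) (⇑u)).im = 0) := by
  obtain ⟨C, hC⟩ := hbd
  have ha : MemLp (fun z ↦ (a z : ℂ)) ∞ :=
    memLp_top_of_bound (Complex.measurable_ofReal.comp hmeas).aestronglyMeasurable C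
      (.of_forall fun z ↦ by simpa using hC z)
  obtain ⟨integrable, existsUnique, nonneg⟩ := antiWick_quantization_general ha
  refine ⟨integrable, existsUnique, fun T hT ha_nonneg u ↦ ?_⟩
  have hTu := nonneg T hT (.of_forall fun z ↦ Complex.zero_le_real.2 (ha_nonneg z)) u
  exact (Complex.nonneg_iff.1 hTu).imp_right Eq.symm

end
end
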